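/- Under the hypotheses of one iteration of projective splitting at p = (z, w₁,…,w_{n−1}), suppose the gradient g = (γ⁻¹(y₁+⋯+yₙ), x₁ − xₙ, …, x_{n−1} − xₙ) of the separator function φ is nonzero, and let p⁺ = p − β (φ(p)/‖g‖_γ²) g with β ∈ [β̲, β̄], 0 < β̲ ≤ β̄ < 2. Then Σ_{i=1}^{n} ‖z − x_i‖² ≤ (ξ₁/(β̲² ξ₂²)) ‖p⁺ − p‖_γ², where ξ₁ = 2n[1 + 2γ⁻¹(L̄²|F| + ρ̲⁻²(1+δ))] and ξ₂ = min{(1−σ)ρ̄⁻¹, min_{j∈F}(ρ̄_j⁻¹ − L_j)}. -/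

import Mathlib

open scoped RealInnerProductSpace

/-!
A forward step is an inexact backward step: with `y = T x`, the equation `x = z - ρ (T z - w)` reads
`x + ρ y = z + ρ w + e` for `e = ρ (T x - T z)`, and the Lipschitz bound on `T` makes `e` satisfy
the error conditions with `ρ L` and `(ρ L) ^ 2` in place of `σ` and `δ`. For every inexact backward
step, `y - w = ρ⁻¹ ((z - x) + e)`, so `⟪z - x, y - w⟫` is bounded below and `‖y - w‖ ^ 2` above by
multiples of `‖z - x‖ ^ 2`. Write `S = ∑ ‖z - x i‖ ^ 2`. As the dual vectors sum to zero, summing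
over the operators gives `ξ₂ S ≤ φ(p)` and `‖g‖ ^ 2 ≤ ξ₁ S`, so that
`‖p⁺ - p‖ ^ 2 = β ^ 2 φ(p) ^ 2 / ‖g‖ ^ 2` is at least `(β ξ₂) ^ 2 S / ξ₁`.
-/

namespace ProjectiveSplitting

section Norm

variable {H ι : Type*} [SeminormedAddCommGroup H]

theorem norm_add_sq_le_two_mul (a b : H) : ‖a + b‖ ^ 2 ≤ 2 * (‖a‖ ^ 2 + ‖b‖ ^ 2) :=
  (pow_le_pow_left₀ (norm_nonneg _) (norm_add_le a b) 2).trans add_sq_le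

theorem norm_sum_sq_le_card_mul_sum (s : Finset ι) (f : ι → H) :
    ‖∑ i ∈ s, f i‖ ^ 2 ≤ s.card * ∑ i ∈ s, ‖f i‖ ^ 2 :=
  (pow_le_pow_left₀ (norm_nonneg _) (norm_sum_le s f) 2).trans sq_sum_le_card_mul_sum_sq

theorem norm_sub_sq_le_two_mul_sum {s : Finset ι} {i j : ι} (hi : i ∈ s) (hj : j ∈ s)
    (z : H) (x : ι → H) : ‖x i - x j‖ ^ 2 ≤ 2 * ∑ k ∈ s, ‖z - x k‖ ^ 2 := by
  classical
  rcases eq_or_ne i j with rfl | hij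
  · simpa only [sub_self, norm_zero, zero_pow two_ne_zero] using
      mul_nonneg zero_le_two (Finset.sum_nonneg fun k _ ↦ sq_nonneg ‖z - x k‖)
  calc ‖x i - x j‖ ^ 2 = ‖(z - x j) + -(z - x i)‖ ^ 2 := by
        congr 2
        abel
    _ ≤ 2 * (‖z - x j‖ ^ 2 + ‖z - x i‖ ^ 2) := by
        simpa only [norm_neg] using norm_add_sq_le_two_mul (z - x j) (-(z - x i))
    _ = 2 * ∑ k ∈ {i, j}, ‖z - x k‖ ^ 2 := by rw [Finset.sum_pair hij, add_comm]
    _ ≤ 2 * ∑ k ∈ s, ‖z - x k‖ ^ 2 := by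
        gcongr
        simp [Finset.insert_subset_iff, hi, hj]

end Norm

section SingleOperator

variable {H : Type*} [SeminormedAddCommGroup H] [InnerProductSpace ℝ H]
  {ρ σ δ L c κ : ℝ} {z w x y e Tz Tx : H}

/-- A backward step of stepsize `ρ` from `z` and the dual vector `w` to the point `x` and the
operator value `y`, with error `e` small relative to `z - x`. The operator itself does not appear:
only the step equation and the two error bounds relating `e` to `z - x` enter the estimates. -/
structure IsInexactBackwardStep (ρ σ δ : ℝ) (z w x y e : H) : Prop where
  add_smul_eq : x + ρ • y = z + ρ • w + e
  neg_le_inner : -(σ * ‖z - x‖ ^ 2) ≤ ⟪z - x, e⟫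
  norm_error_sq_le : ‖e‖ ^ 2 ≤ δ * ‖z - x‖ ^ 2

namespace IsInexactBackwardStep

theorem sub_eq_inv_smul (h : IsInexactBackwardStep ρ σ δ z w x y e) (hρ : ρ ≠ 0) :
    y - w = ρ⁻¹ • ((z - x) + e) := by
  rw [eq_inv_smul_iff₀ hρ, smul_sub, sub_add_eq_add_sub, sub_eq_sub_iff_add_eq_add,
    add_right_comm, ← h.add_smul_eq, add_comm]

theorem mul_norm_sq_le_inner (h : IsInexactBackwardStep ρ σ δ z w x y e) (hρ : 0 < ρ)
    (hc : c ≤ (1 - σ) / ρ) : c * ‖z - x‖ ^ 2 ≤ ⟪z - x, y - w⟫ := by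
  have herr := h.neg_le_inner
  rw [h.sub_eq_inv_smul hρ.ne', inner_smul_right, inner_add_right, real_inner_self_eq_norm_sq]
  calc c * ‖z - x‖ ^ 2 ≤ (1 - σ) / ρ * ‖z - x‖ ^ 2 := by gcongr
    _ = ρ⁻¹ * (‖z - x‖ ^ 2 + -(σ * ‖z - x‖ ^ 2)) := by ring
    _ ≤ ρ⁻¹ * (‖z - x‖ ^ 2 + ⟪z - x, e⟫) := by gcongr

theorem norm_sub_sq_le (h : IsInexactBackwardStep ρ σ δ z w x y e) (hρ : ρ ≠ 0)
    (hκ : (1 + δ) / ρ ^ 2 ≤ κ) : ‖y - w‖ ^ 2 ≤ 2 * κ * ‖z - x‖ ^ 2 := by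
  have herr := h.norm_error_sq_le
  rw [h.sub_eq_inv_smul hρ, norm_smul, mul_pow, Real.norm_eq_abs, sq_abs]
  calc ρ⁻¹ ^ 2 * ‖z - x + e‖ ^ 2 ≤ ρ⁻¹ ^ 2 * (2 * (‖z - x‖ ^ 2 + δ * ‖z - x‖ ^ 2)) := by
        gcongr
        exact (norm_add_sq_le_two_mul _ _).trans (by gcongr)
    _ = 2 * ((1 + δ) / ρ ^ 2) * ‖z - x‖ ^ 2 := by ring
    _ ≤ 2 * κ * ‖z - x‖ ^ 2 := by gcongr

theorem of_forward (hρ : 0 ≤ ρ) (hx : x = z - ρ • (Tz - w)) (hTx : ‖Tx - Tz‖ ≤ L * ‖x - z‖) :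
    IsInexactBackwardStep ρ (ρ * L) ((ρ * L) ^ 2) z w x Tx (ρ • (Tx - Tz)) := by
  have hnorm : ‖ρ • (Tx - Tz)‖ ≤ ρ * L * ‖z - x‖ := by
    rw [norm_smul, Real.norm_of_nonneg hρ, mul_assoc, norm_sub_rev z x]
    gcongr
  refine ⟨?_, ?_, ?_⟩
  · rw [hx]
    module
  · refine neg_le_of_abs_le ((abs_real_inner_le_norm _ _).trans ?_)
    calc ‖z - x‖ * ‖ρ • (Tx - Tz)‖ ≤ ‖z - x‖ * (ρ * L * ‖z - x‖) := by gcongr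
      _ = ρ * L * ‖z - x‖ ^ 2 := by ring
  · rw [← mul_pow]
    gcongr

end IsInexactBackwardStep

end SingleOperator

theorem le_div_mul_sq_mul {S φ π ξ₁ ξ₂ β βlo : ℝ} (hS : 0 ≤ S) (hπ : 0 < π) (hξ₂ : 0 < ξ₂)
    (hβlo : 0 < βlo) (hβ : βlo ≤ β) (hφ : ξ₂ * S ≤ φ) (hπS : π ≤ ξ₁ * S) :
    S ≤ ξ₁ / (βlo ^ 2 * ξ₂ ^ 2) * ((β * φ / π) ^ 2 * π) := by
  have hξ₁ : 0 ≤ ξ₁ := (pos_of_mul_pos_left (hπ.trans_le hπS) hS).le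
  have hβ0 : 0 ≤ β := hβlo.le.trans hβ
  have hstep : (β * φ / π) ^ 2 * π = (β * φ) ^ 2 / π := by field_simp
  rw [hstep, div_mul_div_comm, le_div_iff₀ (by positivity)]
  calc S * (βlo ^ 2 * ξ₂ ^ 2 * π) ≤ S * (βlo ^ 2 * ξ₂ ^ 2 * (ξ₁ * S)) := by gcongr
    _ = ξ₁ * (βlo * (ξ₂ * S)) ^ 2 := by ring
    _ ≤ ξ₁ * (β * φ) ^ 2 := by gcongr

section Separator

variable {H : Type*} [SeminormedAddCommGroup H] {m : ℕ} {γ κ : ℝ}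

/-- The dual vectors `(w₁, …, wₙ)` of projective splitting with `n = m + 1`, of which only the first
`m` are free and the last is determined by `w₁ + ⋯ + wₙ = 0`. -/
def dual (w : Fin m → H) : Fin (m + 1) → H :=
  Fin.snoc w (-∑ i, w i)

theorem sum_dual (w : Fin m → H) : ∑ i, dual w i = 0 := by
  simp [dual, Fin.sum_univ_castSucc]

/-- The squared `γ`-norm of the gradient `(γ⁻¹ (y₁ + ⋯ + yₙ), x₁ - xₙ, …, xₙ₋₁ - xₙ)` of the
separator function, with `n = m + 1`. -/
noncomputable def gradNormSq (γ : ℝ) (x y : Fin (m + 1) → H) : ℝ :=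
  (1 / γ) * ‖∑ i, y i‖ ^ 2 + ∑ i : Fin m, ‖x i.castSucc - x (Fin.last m)‖ ^ 2

theorem gradNormSq_le (hγ : 0 ≤ γ) {z : H} {w : Fin m → H} {x y : Fin (m + 1) → H}
    (hyw : ∀ i, ‖y i - dual w i‖ ^ 2 ≤ κ * ‖z - x i‖ ^ 2) :
    gradNormSq γ x y ≤ (m + 1) * (2 + κ / γ) * ∑ i, ‖z - x i‖ ^ 2 := by
  set S := ∑ i, ‖z - x i‖ ^ 2 with hS
  have hy : ‖∑ i, y i‖ ^ 2 ≤ (m + 1) * (κ * S) := by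
    calc ‖∑ i, y i‖ ^ 2 = ‖∑ i, (y i - dual w i)‖ ^ 2 := by
          rw [Finset.sum_sub_distrib, sum_dual, sub_zero]
      _ ≤ (m + 1) * ∑ i, ‖y i - dual w i‖ ^ 2 := by
          simpa using norm_sum_sq_le_card_mul_sum Finset.univ fun i ↦ y i - dual w i
      _ ≤ (m + 1) * (κ * S) := by
          gcongr
          rw [hS, Finset.mul_sum]
          exact Finset.sum_le_sum fun i _ ↦ hyw i
  have hx : ∑ i : Fin m, ‖x i.castSucc - x (Fin.last m)‖ ^ 2 ≤ m * (2 * S) := by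
    simpa using Finset.sum_le_card_nsmul Finset.univ _ _ fun (i : Fin m) _ ↦
      norm_sub_sq_le_two_mul_sum (Finset.mem_univ i.castSucc) (Finset.mem_univ (Fin.last m)) z x
  have hS0 : 0 ≤ S := by positivity
  calc gradNormSq γ x y ≤ (1 / γ) * ((m + 1) * (κ * S)) + (m + 1) * (2 * S) := by
        unfold gradNormSq
        gcongr
        exact hx.trans (mul_le_mul_of_nonneg_right (le_add_of_nonneg_right zero_le_one)
          (mul_nonneg zero_le_two hS0))
    _ = (m + 1) * (2 + κ / γ) * S := by ring

variable [InnerProductSpace ℝ H]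

/-- The separator function `φ` of projective splitting, with `n = m + 1`. -/
def separator (x y : Fin (m + 1) → H) (z : H) (w : Fin m → H) : ℝ :=
  ∑ i : Fin m, ⟪z - x i.castSucc, y i.castSucc - w i⟫
    + ⟪z - x (Fin.last m), y (Fin.last m) + ∑ i, w i⟫

theorem separator_eq_sum_inner (x y : Fin (m + 1) → H) (z : H) (w : Fin m → H) :
    separator x y z w = ∑ i, ⟪z - x i, y i - dual w i⟫ := by
  simp [separator, dual, Fin.sum_univ_castSucc]

theorem mul_sum_norm_sq_le_separator {c : ℝ} {z : H} {w : Fin m → H} {x y : Fin (m + 1) → H}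
    (h : ∀ i, c * ‖z - x i‖ ^ 2 ≤ ⟪z - x i, y i - dual w i⟫) :
    c * ∑ i, ‖z - x i‖ ^ 2 ≤ separator x y z w := by
  rw [separator_eq_sum_inner, Finset.mul_sum]
  exact Finset.sum_le_sum fun i _ ↦ h i

theorem norm_sq_step_eq_sq_mul_gradNormSq (hγ : γ ≠ 0) {z zplus : H} {w wplus : Fin m → H}
    {x y : Fin (m + 1) → H} {α : ℝ} (hz : zplus = z - ((1 / γ) * α) • ∑ i, y i)
    (hw : ∀ i : Fin m, wplus i = w i - α • (x i.castSucc - x (Fin.last m))) :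
    γ * ‖zplus - z‖ ^ 2 + ∑ i, ‖wplus i - w i‖ ^ 2 = α ^ 2 * gradNormSq γ x y := by
  simp only [hz, hw, sub_sub_cancel_left, norm_neg, norm_smul, mul_pow, Real.norm_eq_abs, sq_abs,
    ← Finset.mul_sum, gradNormSq]
  field_simp

theorem sum_norm_sq_le_of_bounds (hγ : 0 < γ) {c ξ₁ β βlo α : ℝ} {z zplus : H}
    {w wplus : Fin m → H} {x y : Fin (m + 1) → H} (hc : 0 < c)
    (hinner : ∀ i, c * ‖z - x i‖ ^ 2 ≤ ⟪z - x i, y i - dual w i⟫)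
    (hyw : ∀ i, ‖y i - dual w i‖ ^ 2 ≤ κ * ‖z - x i‖ ^ 2)
    (hξ₁ : (m + 1) * (2 + κ / γ) ≤ ξ₁) (hg : 0 < gradNormSq γ x y)
    (hβlo : 0 < βlo) (hβ : βlo ≤ β) (hα : α = β * separator x y z w / gradNormSq γ x y)
    (hz : zplus = z - ((1 / γ) * α) • ∑ i, y i)
    (hw : ∀ i : Fin m, wplus i = w i - α • (x i.castSucc - x (Fin.last m))) :
    ∑ i, ‖z - x i‖ ^ 2 ≤ ξ₁ / (βlo ^ 2 * c ^ 2) *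
      (γ * ‖zplus - z‖ ^ 2 + ∑ i, ‖wplus i - w i‖ ^ 2) := by
  have hgle : gradNormSq γ x y ≤ ξ₁ * ∑ i, ‖z - x i‖ ^ 2 :=
    (gradNormSq_le hγ.le hyw).trans (by gcongr)
  rw [norm_sq_step_eq_sq_mul_gradNormSq hγ.ne' hz hw, hα]
  exact le_div_mul_sq_mul (by positivity) hg hc hβlo hβ (mul_sum_norm_sq_le_separator hinner) hgle

end Separator

section Stepsizes

variable {ι : Type*} [DecidableEq ι] {B : Finset ι} {ρ ρbar L : ι → ℝ} {σ ρhi : ℝ} {i : ι}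

/-- The term of the operator `i` in the minimum `ξ₂`, with `B` the set of backward operators. -/
noncomputable def stepGap (B : Finset ι) (σ ρhi : ℝ) (ρbar L : ι → ℝ) (i : ι) : ℝ :=
  if i ∈ B then (1 - σ) / ρhi else 1 / ρbar i - L i

theorem stepGap_pos (hσ : σ < 1) (hρhi : i ∈ B → 0 < ρhi)
    (hρbar : i ∉ B → 0 < ρbar i ∧ ρbar i * L i < 1) : 0 < stepGap B σ ρhi ρbar L i := by
  unfold stepGap
  split_ifs with hi
  · exact div_pos (sub_pos.2 hσ) (hρhi hi)
  · obtain ⟨hpos, hlt⟩ := hρbar hi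
    rwa [sub_pos, lt_div_iff₀' hpos]

theorem stepGap_le_of_mem (hi : i ∈ B) (hσ : σ ≤ 1) (hρ : 0 < ρ i) (hle : ρ i ≤ ρhi) :
    stepGap B σ ρhi ρbar L i ≤ (1 - σ) / ρ i := by
  rw [stepGap, if_pos hi]
  exact div_le_div_of_nonneg_left (sub_nonneg.2 hσ) hρ hle

theorem stepGap_le_of_notMem (hi : i ∉ B) (hρ : 0 < ρ i) (hle : ρ i ≤ ρbar i) :
    stepGap B σ ρhi ρbar L i ≤ (1 - ρ i * L i) / ρ i := by
  rw [stepGap, if_neg hi, sub_div, mul_div_cancel_left₀ _ hρ.ne']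
  gcongr

theorem one_add_mul_sq_div_sq_le {ρlo ρ L Lbar : ℝ} (hρlo : 0 < ρlo) (hρ : ρlo ≤ ρ)
    (hL : 0 ≤ L) (hLbar : L ≤ Lbar) : (1 + (ρ * L) ^ 2) / ρ ^ 2 ≤ Lbar ^ 2 + 1 / ρlo ^ 2 := by
  have hρ0 : ρ ≠ 0 := (hρlo.trans_le hρ).ne'
  calc (1 + (ρ * L) ^ 2) / ρ ^ 2 = L ^ 2 + 1 / ρ ^ 2 := by
        field_simp
        ring
    _ ≤ Lbar ^ 2 + 1 / ρlo ^ 2 := by gcongr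

end Stepsizes

end ProjectiveSplitting

open ProjectiveSplitting

theorem x_residual_bound_one_iteration_general
    {H : Type*} [SeminormedAddCommGroup H] [InnerProductSpace ℝ H]
    {m : ℕ} {γ : ℝ} (hγ : 0 < γ) {B F : Finset (Fin (m + 1))} (hBFunion : B ∪ F = Finset.univ)
    {Tf : Fin (m + 1) → H → H} {L : Fin (m + 1) → ℝ} (hL0 : ∀ i ∈ F, 0 ≤ L i)
    (hLip : ∀ i ∈ F, ∀ u v : H, ‖Tf i u - Tf i v‖ ≤ L i * ‖u - v‖)
    {z : H} {w : Fin m → H} {x y e : Fin (m + 1) → H} {ρ : Fin (m + 1) → ℝ} {σ δ : ℝ}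
    (hσ : σ < 1) (hδ : 0 ≤ δ) {ρlo ρhi : ℝ} {ρbar : Fin (m + 1) → ℝ} (hρlo : 0 < ρlo)
    (hρge : ∀ i, ρlo ≤ ρ i) (hρB : ∀ i ∈ B, ρ i ≤ ρhi)
    (hρF : ∀ i ∈ F, ρ i ≤ ρbar i ∧ ρbar i * L i < 1)
    (hback : ∀ i ∈ B, x i + ρ i • y i = z + ρ i • dual w i + e i)
    (hforw : ∀ i ∈ F, x i = z - ρ i • (Tf i z - dual w i) ∧ y i = Tf i (x i))
    (herr_inner : ∀ i ∈ B, -(σ * ‖z - x i‖ ^ 2) ≤ ⟪z - x i, e i⟫)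
    (herr_norm : ∀ i ∈ B, ‖e i‖ ^ 2 ≤ δ * ‖z - x i‖ ^ 2)
    {Lbar : ℝ}
    (hLbar : Lbar = Finset.univ.sup' Finset.univ_nonempty (fun i ↦ if i ∈ F then L i else 0))
    {ξ₁ : ℝ} (hξ₁ : ξ₁ = 2 * (m + 1 : ℝ) *
      (1 + 2 / γ * (Lbar ^ 2 * (F.card : ℝ) + (1 + δ) / ρlo ^ 2)))
    {ξ₂ : ℝ} (hξ₂ : ξ₂ = Finset.univ.inf' Finset.univ_nonempty (stepGap B σ ρhi ρbar L))
    (hg : 0 < gradNormSq γ x y) {β βlo α : ℝ} (hβlo : 0 < βlo) (hβ : βlo ≤ β)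
    (hα : α = β * separator x y z w / gradNormSq γ x y)
    {zplus : H} {wplus : Fin m → H} (hzplus : zplus = z - ((1 / γ) * α) • ∑ i, y i)
    (hwplus : ∀ i : Fin m, wplus i = w i - α • (x i.castSucc - x (Fin.last m))) :
    ∑ i, ‖z - x i‖ ^ 2 ≤ ξ₁ / (βlo ^ 2 * ξ₂ ^ 2) *
      (γ * ‖zplus - z‖ ^ 2 + ∑ i, ‖wplus i - w i‖ ^ 2) := by
  set κ := Lbar ^ 2 * (F.card : ℝ) + (1 + δ) / ρlo ^ 2
  have hρ (i) : 0 < ρ i := hρlo.trans_le (hρge i)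
  have hF {i} (hi : i ∉ B) : i ∈ F :=
    (Finset.mem_union.1 (hBFunion ▸ Finset.mem_univ i)).resolve_left hi
  have hξ₂pos : 0 < ξ₂ := hξ₂ ▸ (Finset.lt_inf'_iff _).2 fun i _ ↦
    stepGap_pos hσ (fun hi ↦ (hρ i).trans_le (hρB i hi))
      fun hi ↦ ⟨(hρ i).trans_le (hρF i (hF hi)).1, (hρF i (hF hi)).2⟩
  have hξ₂le (i) : ξ₂ ≤ stepGap B σ ρhi ρbar L i := hξ₂ ▸ Finset.inf'_le _ (Finset.mem_univ i)
  have hsteps (i) : ∃ s d e', IsInexactBackwardStep (ρ i) s d z (dual w i) (x i) (y i) e' ∧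
      ξ₂ ≤ (1 - s) / ρ i ∧ (1 + d) / ρ i ^ 2 ≤ κ := by
    by_cases hi : i ∈ B
    · have hdiv : (1 + δ) / ρ i ^ 2 ≤ κ :=
        le_add_of_nonneg_of_le (by positivity) (by gcongr; exact hρge i)
      exact ⟨σ, δ, e i, ⟨hback i hi, herr_inner i hi, herr_norm i hi⟩,
        (hξ₂le i).trans (stepGap_le_of_mem hi hσ.le (hρ i) (hρB i hi)), hdiv⟩
    · have hiF := hF hi
      obtain ⟨hxi, hyi⟩ := hforw i hiF
      have hLi : L i ≤ Lbar :=
        hLbar ▸ Finset.le_sup'_of_le _ (Finset.mem_univ i) (if_pos hiF).ge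
      have hcard : (1 : ℝ) ≤ F.card := mod_cast Finset.card_pos.2 ⟨i, hiF⟩
      have hdiv : (1 + (ρ i * L i) ^ 2) / ρ i ^ 2 ≤ κ :=
        (one_add_mul_sq_div_sq_le hρlo (hρge i) (hL0 i hiF) hLi).trans <|
          add_le_add (le_mul_of_one_le_right (sq_nonneg _) hcard) (by gcongr; linarith)
      exact ⟨ρ i * L i, (ρ i * L i) ^ 2, _, .of_forward (hρ i).le hxi (hyi ▸ hLip i hiF (x i) z),
        (hξ₂le i).trans (stepGap_le_of_notMem hi (hρ i) (hρF i hiF).1), hdiv⟩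
  choose s d e' hstep hgap hdiv using hsteps
  have hκξ₁ : (m + 1) * (2 + 2 * κ / γ) ≤ ξ₁ := by
    have hκ0 : 0 ≤ (m + 1) * (κ / γ) := by positivity
    linear_combination 2 * hκ0 + hξ₁.ge
  exact sum_norm_sq_le_of_bounds hγ hξ₂pos (fun i ↦ (hstep i).mul_norm_sq_le_inner (hρ i) (hgap i))
    (fun i ↦ (hstep i).norm_sub_sq_le (hρ i).ne' (hdiv i)) hκξ₁ hg hβlo hβ hα hzplus hwplus

/-- After the relaxed projection step `p⁺ = p − β (φ(p)/‖g‖_γ²) g` of one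
iteration of projective splitting (with `g` the nonzero γ-gradient of the separator
function and `β ∈ [β̲, β̄] ⊆ (0,2)`), one has
`Σᵢ ‖z − xᵢ‖² ≤ (ξ₁/(β̲² ξ₂²)) ‖p⁺ − p‖_γ²`.  Here `n = m+1 ≥ 1`. -/
theorem x_residual_bound_one_iteration
    {H : Type*} [NormedAddCommGroup H] [InnerProductSpace ℝ H] [CompleteSpace H]
    (m : ℕ) (γ : ℝ) (hγ : 0 < γ)
    (B F : Finset (Fin (m+1))) (hBF : Disjoint B F) (hBFunion : B ∪ F = Finset.univ)
    (T : Fin (m+1) → H → Set H) (Tf : Fin (m+1) → H → H) (L : Fin (m+1) → ℝ)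
    (hTmono : ∀ i ∈ B, ∀ x x' y y' : H, y ∈ T i x → y' ∈ T i x' → 0 ≤ ⟪x - x', y - y'⟫)
    (hTfmono : ∀ i ∈ F, ∀ u v : H, 0 ≤ ⟪u - v, Tf i u - Tf i v⟫)
    (hL0 : ∀ i ∈ F, 0 ≤ L i)
    (hLip : ∀ i ∈ F, ∀ u v : H, ‖Tf i u - Tf i v‖ ≤ L i * ‖u - v‖)
    (z : H) (w : Fin m → H) (wfull : Fin (m+1) → H)
    (hwfull : wfull = Fin.snoc w (-(∑ i : Fin m, w i)))
    (x y : Fin (m+1) → H) (ρ : Fin (m+1) → ℝ) (e : Fin (m+1) → H)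
    (σ δ : ℝ) (hσ0 : 0 ≤ σ) (hσ1 : σ < 1) (hδ : 0 ≤ δ)
    (ρlo ρhi : ℝ) (ρbar : Fin (m+1) → ℝ)
    (hρlo : 0 < ρlo) (hρge : ∀ i, ρlo ≤ ρ i)
    (hρB : ∀ i ∈ B, ρ i ≤ ρhi)
    (hρF : ∀ i ∈ F, ρ i ≤ ρbar i ∧ ρbar i * L i < 1)
    (hback : ∀ i ∈ B, y i ∈ T i (x i) ∧ x i + ρ i • y i = z + ρ i • wfull i + e i)
    (hforw : ∀ i ∈ F, x i = z - ρ i • (Tf i z - wfull i) ∧ y i = Tf i (x i))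
    (herr1 : ∀ i ∈ B, -(σ * ‖z - x i‖ ^ 2) ≤ ⟪z - x i, e i⟫)
    (herr2 : ∀ i ∈ B, ⟪e i, y i - wfull i⟫ ≤ ρ i * σ * ‖y i - wfull i‖ ^ 2)
    (herr3 : ∀ i ∈ B, ‖e i‖ ^ 2 ≤ δ * ‖z - x i‖ ^ 2)
    (φval : ℝ)
    (hφval : φval = (∑ i : Fin m, ⟪z - x i.castSucc, y i.castSucc - w i⟫)
      + ⟪z - x (Fin.last m), y (Fin.last m) + ∑ i : Fin m, w i⟫)
    (Lbar : ℝ)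
    (hLbar : Lbar = Finset.univ.sup' Finset.univ_nonempty (fun i => if i ∈ F then L i else 0))
    (ξ₁ : ℝ)
    (hξ₁ : ξ₁ = 2 * (m+1 : ℝ) *
      (1 + 2 / γ * (Lbar ^ 2 * (F.card : ℝ) + (1 + δ) / ρlo ^ 2)))
    (ξ₂ : ℝ)
    (hξ₂ : ξ₂ = Finset.univ.inf' Finset.univ_nonempty
      (fun i => if i ∈ B then (1 - σ) / ρhi else 1 / ρbar i - L i))
    (π : ℝ)
    (hπdef : π = (1 / γ) * ‖∑ i : Fin (m+1), y i‖ ^ 2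
      + ∑ i : Fin m, ‖x i.castSucc - x (Fin.last m)‖ ^ 2)
    (hπpos : 0 < π)
    (β βlo βhi : ℝ) (hβlo : 0 < βlo) (hβ1 : βlo ≤ β) (hβ2 : β ≤ βhi) (hβhi : βhi < 2)
    (α : ℝ) (hα : α = β * φval / π)
    (zplus : H) (wplus : Fin m → H)
    (hzplus : zplus = z - ((1 / γ) * α) • (∑ i : Fin (m+1), y i))
    (hwplus : ∀ i : Fin m, wplus i = w i - α • (x i.castSucc - x (Fin.last m))) :
    ∑ i : Fin (m+1), ‖z - x i‖ ^ 2
      ≤ (ξ₁ / (βlo ^ 2 * ξ₂ ^ 2)) *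
        (γ * ‖zplus - z‖ ^ 2 + ∑ i : Fin m, ‖wplus i - w i‖ ^ 2) := by
  subst hwfull hφval hπdef
  exact x_residual_bound_one_iteration_general hγ hBFunion hL0 hLip hσ1 hδ hρlo hρge hρB hρF
    (fun i hi ↦ (hback i hi).2) hforw herr1 herr3 hLbar hξ₁ hξ₂ hπpos hβlo hβ1 hα hzplus hwplus
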